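/- Under the local assumptions, let {x_k} be the LMMSS sequence with unit steps: x_{k+1} = x_k + d_k, where d_k solves (J(x_k)ᵀJ(x_k) + λ_k LᵀL)d_k = −J(x_k)ᵀF(x_k) with λ_k = ‖F(x_k)‖² (and d_k = 0 if F(x_k) = 0). If x₀ ∈ B(x*, r) with r = min{ δ/(2 + 4c₃), 1/(2c₅) }, then: (i) dist(x_{k+1}, X*) ≤ c₅·dist(x_k, X*)² for every k; (ii) dist(x_k, X*) → 0 as k → ∞; and (iii) the sequence {x_k} converges to a point x̂ ∈ X* ∩ B(x*, δ). -/

import Mathlib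

open Matrix Metric

/-- The continuous linear map on Euclidean spaces induced by a real matrix. -/
noncomputable def matCLM {m n : ℕ} (A : Matrix (Fin m) (Fin n) ℝ) :
    EuclideanSpace ℝ (Fin n) →L[ℝ] EuclideanSpace ℝ (Fin m) :=
  LinearMap.toContinuousLinearMap (Matrix.toEuclideanLin A)

/-- `c₃ = (1/(c₂√γ))·√(c₁² + c₂²(nL² + c_F²))`, where `nL = ‖L‖` (spectral norm). -/
noncomputable def lmC3 (c1 c2 cF γ nL : ℝ) : ℝ :=
  (1 / (c2 * Real.sqrt γ)) * Real.sqrt (c1 ^ 2 + c2 ^ 2 * (nL ^ 2 + cF ^ 2))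

/-- `c₄ = √(c₁² + c_F²·nL²)`, where `nL = ‖L‖` (spectral norm). -/
noncomputable def lmC4 (c1 cF nL : ℝ) : ℝ :=
  Real.sqrt (c1 ^ 2 + cF ^ 2 * nL ^ 2)

/-- `c₅ = (c₁c₃² + c₄)/c₂`. -/
noncomputable def lmC5 (c1 c2 cF γ nL : ℝ) : ℝ :=
  (c1 * (lmC3 c1 c2 cF γ nL) ^ 2 + lmC4 c1 cF nL) / c2

/-!
The step `d` at `y` minimizes `φ(v) = ‖J(y)v + F(y)‖² + ‖F(y)‖²‖Lv‖²`. Comparing `φ(d)` with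
`φ(z - y)` for solutions `z` whose distance to `y` tends to `D = dist(y, X*)`, the linearization
bound gives `φ(d) ≤ c₁²D⁴ + ‖F(y)‖²‖L‖²D²`. Since `c₂D ≤ ‖F(y)‖ ≤ c_F D`, the two terms of `φ(d)`
yield `‖J(y)d + F(y)‖ ≤ c₄D²` and, through the completeness condition, `‖d‖ ≤ c₃D`. Linearizing
once more and applying the error bound at `y + d` gives `dist(y + d, X*) ≤ c₅D²`, as long as
`y + d` is still near `x*`. The choice of `r` makes `dist(x_k, X*)` at least halve at each step,
so the step lengths are dominated by a geometric series and the iterates never leave `B(x*, δ)`.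
-/

open Filter Topology
open scoped RealInnerProductSpace

section RegularizedLeastSquares

variable {E G H : Type*} [NormedAddCommGroup E] [NormedSpace ℝ E]
  [NormedAddCommGroup G] [InnerProductSpace ℝ G] [NormedAddCommGroup H] [InnerProductSpace ℝ H]
  {A : E →L[ℝ] G} {B : E →L[ℝ] H} {μ : ℝ} {f : G} {d : E}

lemma norm_add_sq_add_mul_le_of_forall_inner_eq_zero (hμ : 0 ≤ μ)
    (h : ∀ w, ⟪A d + f, A w⟫ + μ * ⟪B d, B w⟫ = 0) (v : E) :
    ‖A d + f‖ ^ 2 + μ * ‖B d‖ ^ 2 ≤ ‖A v + f‖ ^ 2 + μ * ‖B v‖ ^ 2 := by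
  have hA : A v + f = (A d + f) + A (v - d) := by rw [map_sub]; abel
  have hB : B v = B d + B (v - d) := by rw [map_sub]; abel
  rw [hA, hB, norm_add_sq_real (A d + f), norm_add_sq_real (B d)]
  have hcross := h (v - d)
  have hsq : 0 ≤ ‖A (v - d)‖ ^ 2 + μ * ‖B (v - d)‖ ^ 2 := by positivity
  linarith

lemma norm_apply_le_of_forall_inner_eq_zero (hμ : 0 ≤ μ)
    (h : ∀ w, ⟪A d + f, A w⟫ + μ * ⟪B d, B w⟫ = 0) : ‖A d‖ ≤ ‖f‖ := by
  have henergy : ‖A d‖ ^ 2 + ⟪f, A d⟫ + μ * ‖B d‖ ^ 2 = 0 := by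
    simpa only [inner_add_left, real_inner_self_eq_norm_sq] using h d
  have hcauchy : -(‖f‖ * ‖A d‖) ≤ ⟪f, A d⟫ := (abs_le.1 (abs_real_inner_le_norm f (A d))).1
  have hB : 0 ≤ μ * ‖B d‖ ^ 2 := by positivity
  by_contra! hlt
  nlinarith [norm_nonneg f]

/-- `d` is the LMMSS step for the Jacobian `A`, the scaling operator `B` and the residual `f`: it
vanishes if `f` does, and solves `(A†A + ‖f‖²B†B)d = -A†f`. The equation is written in weak form,
which needs no adjoints and so makes sense when `E` is a Banach space. -/
def IsLMStep (A : E →L[ℝ] G) (B : E →L[ℝ] H) (f : G) (d : E) : Prop :=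
  (f = 0 → d = 0) ∧ ∀ w, ⟪A d + f, A w⟫ + ‖f‖ ^ 2 * ⟪B d, B w⟫ = 0

end RegularizedLeastSquares

section Constants

variable {c1 c2 cF γ nL : ℝ}

lemma lmC3_nonneg (hc2 : 0 ≤ c2) : 0 ≤ lmC3 c1 c2 cF γ nL := by
  unfold lmC3; positivity

lemma mul_lmC3_sq (hc2 : 0 < c2) (hγ : 0 < γ) :
    γ * c2 ^ 2 * lmC3 c1 c2 cF γ nL ^ 2 = c1 ^ 2 + c2 ^ 2 * (nL ^ 2 + cF ^ 2) := by
  rw [lmC3, mul_pow, Real.sq_sqrt (by positivity), div_pow, mul_pow, Real.sq_sqrt hγ.le]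
  field_simp

lemma lmC4_nonneg : 0 ≤ lmC4 c1 cF nL := Real.sqrt_nonneg _

lemma lmC4_sq : lmC4 c1 cF nL ^ 2 = c1 ^ 2 + cF ^ 2 * nL ^ 2 := Real.sq_sqrt (by positivity)

lemma lmC5_nonneg (hc1 : 0 ≤ c1) (hc2 : 0 ≤ c2) : 0 ≤ lmC5 c1 c2 cF γ nL :=
  div_nonneg (add_nonneg (mul_nonneg hc1 (sq_nonneg _)) lmC4_nonneg) hc2

end Constants

/-- Replaces the choice of a nearest point of `s`, which need not exist in infinite dimension. -/
lemma le_map_infDist_of_forall_mem_closedBall {X : Type*} [PseudoMetricSpace X] {s : Set X}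
    {p y : X} {δ t : ℝ} {φ : ℝ → ℝ} (hφ : Continuous φ) (hp : p ∈ s) (hy : y ∈ closedBall p δ)
    (h : ∀ z ∈ s, z ∈ closedBall p (2 * δ) → t ≤ φ (dist z y)) : t ≤ φ (infDist y s) := by
  rw [mem_closedBall'] at hy
  let T := s ∩ closedBall y (dist p y)
  have hT : T.Nonempty := ⟨p, hp, mem_closedBall.2 le_rfl⟩
  have hbound : dist y '' T ⊆ {r | t ≤ φ r} := by
    rintro _ ⟨z, ⟨hzs, hzy⟩, rfl⟩
    rw [Set.mem_ofPred_eq, dist_comm]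
    refine h z hzs (mem_closedBall.2 ?_)
    linarith [dist_triangle z y p, mem_closedBall.1 hzy, dist_comm y p]
  have hmem : infDist y T ∈ closure (dist y '' T) := by
    rw [infDist_eq_iInf, iInf, ← Set.image_eq_range]
    exact csInf_mem_closure (hT.image _) ⟨0, by rintro _ ⟨z, -, rfl⟩; exact dist_nonneg⟩
  rw [← infDist_inter_closedBall_of_mem hp]
  exact closure_minimal hbound (isClosed_le continuous_const hφ) hmem

lemma norm_le_mul_infDist_zeros {E G : Type*} [SeminormedAddCommGroup E] [SeminormedAddCommGroup G]
    {F : E → G} {p y : E} {δ cF : ℝ} (hp : F p = 0) (hy : y ∈ closedBall p δ)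
    (hcF : ∀ z ∈ closedBall p (2 * δ), ‖F z - F y‖ ≤ cF * ‖z - y‖) :
    ‖F y‖ ≤ cF * infDist y {z | F z = 0} := by
  refine le_map_infDist_of_forall_mem_closedBall (continuous_const_mul cF) hp hy fun z hz hzp => ?_
  simpa [show F z = 0 from hz, dist_eq_norm] using hcF z hzp

section StepBounds

variable {E G H : Type*} [NormedAddCommGroup E] [NormedSpace ℝ E]
  [NormedAddCommGroup G] [InnerProductSpace ℝ G] [NormedAddCommGroup H] [InnerProductSpace ℝ H]
  {F : E → G} {A : E →L[ℝ] G} {B : E →L[ℝ] H} {f : G} {p y d : E} {δ c1 c2 cF γ D : ℝ}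

namespace IsLMStep

lemma objective_le_infDist_zeros (hd : IsLMStep A B (F y) d) (hp : F p = 0)
    (hy : y ∈ closedBall p δ)
    (hc1 : ∀ z ∈ closedBall p (2 * δ), ‖A (z - y) - (F z - F y)‖ ≤ c1 * ‖z - y‖ ^ 2) :
    ‖A d + F y‖ ^ 2 + ‖F y‖ ^ 2 * ‖B d‖ ^ 2 ≤
      (c1 * infDist y {z | F z = 0} ^ 2) ^ 2 +
        ‖F y‖ ^ 2 * (‖B‖ * infDist y {z | F z = 0}) ^ 2 := by
  refine le_map_infDist_of_forall_mem_closedBall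
    (φ := fun t => (c1 * t ^ 2) ^ 2 + ‖F y‖ ^ 2 * (‖B‖ * t) ^ 2)
    (by fun_prop) hp hy fun z hz hzp => ?_
  have hres : ‖A (z - y) + F y‖ ≤ c1 * ‖z - y‖ ^ 2 := by
    simpa [show F z = 0 from hz] using hc1 z hzp
  calc ‖A d + F y‖ ^ 2 + ‖F y‖ ^ 2 * ‖B d‖ ^ 2
      ≤ ‖A (z - y) + F y‖ ^ 2 + ‖F y‖ ^ 2 * ‖B (z - y)‖ ^ 2 :=
        norm_add_sq_add_mul_le_of_forall_inner_eq_zero (sq_nonneg _) hd.2 _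
    _ ≤ (c1 * dist z y ^ 2) ^ 2 + ‖F y‖ ^ 2 * (‖B‖ * dist z y) ^ 2 := by
      rw [dist_eq_norm]
      gcongr
      exact B.le_opNorm _

lemma norm_le_lmC3_mul (hd : IsLMStep A B f d) (hc2pos : 0 < c2) (hγ : 0 < γ) (hD : 0 ≤ D)
    (hobj : ‖A d + f‖ ^ 2 + ‖f‖ ^ 2 * ‖B d‖ ^ 2 ≤
      (c1 * D ^ 2) ^ 2 + ‖f‖ ^ 2 * (‖B‖ * D) ^ 2)
    (hle : ‖f‖ ≤ cF * D) (hge : c2 * D ≤ ‖f‖) (hcomp : γ * ‖d‖ ^ 2 ≤ ‖A d‖ ^ 2 + ‖B d‖ ^ 2) :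
    ‖d‖ ≤ lmC3 c1 c2 cF γ ‖B‖ * D := by
  have hc3 : 0 ≤ lmC3 c1 c2 cF γ ‖B‖ := lmC3_nonneg hc2pos.le
  rcases eq_or_ne f 0 with hf | hf
  · rw [hd.1 hf, norm_zero]; positivity
  have hA : ‖A d‖ ^ 2 ≤ (cF * D) ^ 2 := by
    gcongr
    exact (norm_apply_le_of_forall_inner_eq_zero (sq_nonneg _) hd.2).trans hle
  have hB : c2 ^ 2 * ‖B d‖ ^ 2 ≤ (c1 ^ 2 + c2 ^ 2 * ‖B‖ ^ 2) * D ^ 2 := by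
    refine le_of_mul_le_mul_left ?_ (by positivity : 0 < ‖f‖ ^ 2)
    calc ‖f‖ ^ 2 * (c2 ^ 2 * ‖B d‖ ^ 2) = c2 ^ 2 * (‖f‖ ^ 2 * ‖B d‖ ^ 2) := by ring
      _ ≤ c2 ^ 2 * ((c1 * D ^ 2) ^ 2 + ‖f‖ ^ 2 * (‖B‖ * D) ^ 2) := by
        gcongr; linarith [sq_nonneg ‖A d + f‖]
      _ = (c2 * D) ^ 2 * (c1 * D) ^ 2 + ‖f‖ ^ 2 * (c2 ^ 2 * ‖B‖ ^ 2 * D ^ 2) := by ring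
      _ ≤ ‖f‖ ^ 2 * (c1 * D) ^ 2 + ‖f‖ ^ 2 * (c2 ^ 2 * ‖B‖ ^ 2 * D ^ 2) := by gcongr
      _ = ‖f‖ ^ 2 * ((c1 ^ 2 + c2 ^ 2 * ‖B‖ ^ 2) * D ^ 2) := by ring
  refine le_of_sq_le_sq (le_of_mul_le_mul_left ?_ (by positivity : 0 < γ * c2 ^ 2)) (by positivity)
  calc γ * c2 ^ 2 * ‖d‖ ^ 2 = c2 ^ 2 * (γ * ‖d‖ ^ 2) := by ring
    _ ≤ c2 ^ 2 * (‖A d‖ ^ 2 + ‖B d‖ ^ 2) := by gcongr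
    _ ≤ c2 ^ 2 * (cF * D) ^ 2 + (c1 ^ 2 + c2 ^ 2 * ‖B‖ ^ 2) * D ^ 2 := by rw [mul_add]; gcongr
    _ = γ * c2 ^ 2 * lmC3 c1 c2 cF γ ‖B‖ ^ 2 * D ^ 2 := by rw [mul_lmC3_sq hc2pos hγ]; ring
    _ = γ * c2 ^ 2 * (lmC3 c1 c2 cF γ ‖B‖ * D) ^ 2 := by ring

end IsLMStep

lemma norm_residual_le_lmC4_mul_sq
    (hobj : ‖A d + f‖ ^ 2 + ‖f‖ ^ 2 * ‖B d‖ ^ 2 ≤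
      (c1 * D ^ 2) ^ 2 + ‖f‖ ^ 2 * (‖B‖ * D) ^ 2)
    (hle : ‖f‖ ≤ cF * D) : ‖A d + f‖ ≤ lmC4 c1 cF ‖B‖ * D ^ 2 := by
  refine le_of_sq_le_sq ?_ (mul_nonneg lmC4_nonneg (sq_nonneg D))
  calc ‖A d + f‖ ^ 2 ≤ ‖A d + f‖ ^ 2 + ‖f‖ ^ 2 * ‖B d‖ ^ 2 := le_add_of_nonneg_right (by positivity)
    _ ≤ (c1 * D ^ 2) ^ 2 + ‖f‖ ^ 2 * (‖B‖ * D) ^ 2 := hobj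
    _ ≤ (c1 * D ^ 2) ^ 2 + (cF * D) ^ 2 * (‖B‖ * D) ^ 2 := by gcongr
    _ = (lmC4 c1 cF ‖B‖ * D ^ 2) ^ 2 := by rw [mul_pow (lmC4 c1 cF ‖B‖), lmC4_sq]; ring

lemma infDist_zeros_add_le_lmC5_mul_sq (hc1pos : 0 ≤ c1) (hc2pos : 0 < c2)
    (hnorm : ‖d‖ ≤ lmC3 c1 c2 cF γ ‖B‖ * D) (hres : ‖A d + F y‖ ≤ lmC4 c1 cF ‖B‖ * D ^ 2)
    (hc1 : ‖A d - (F (y + d) - F y)‖ ≤ c1 * ‖d‖ ^ 2)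
    (hc2 : c2 * infDist (y + d) {z | F z = 0} ≤ ‖F (y + d)‖) :
    infDist (y + d) {z | F z = 0} ≤ lmC5 c1 c2 cF γ ‖B‖ * D ^ 2 := by
  rw [lmC5, div_mul_eq_mul_div, le_div_iff₀' hc2pos]
  calc c2 * infDist (y + d) {z | F z = 0}
      ≤ ‖F (y + d)‖ := hc2
    _ = ‖(A d + F y) - (A d - (F (y + d) - F y))‖ := by congr 1; abel
    _ ≤ ‖A d + F y‖ + ‖A d - (F (y + d) - F y)‖ := norm_sub_le _ _
    _ ≤ lmC4 c1 cF ‖B‖ * D ^ 2 + c1 * (lmC3 c1 c2 cF γ ‖B‖ * D) ^ 2 := by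
      gcongr
      exact hc1.trans (by gcongr)
    _ = (c1 * lmC3 c1 c2 cF γ ‖B‖ ^ 2 + lmC4 c1 cF ‖B‖) * D ^ 2 := by ring

end StepBounds

section QuadraticContraction

variable {X : Type*} [PseudoMetricSpace X] {x : ℕ → X} {p : X} {D : ℕ → ℝ} {δ C K : ℝ}

lemma mem_closedBall_and_le_geometric_of_quadratic_contraction (hD : ∀ k, 0 ≤ D k) (hC : 0 ≤ C)
    (hK : 0 ≤ K) (hD0 : D 0 ≤ dist (x 0) p) (hδ : (1 + 2 * C) * dist (x 0) p ≤ δ)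
    (hhalf : K * dist (x 0) p ≤ 1 / 2)
    (hstep : ∀ k, x k ∈ closedBall p δ → dist (x k) (x (k + 1)) ≤ C * D k)
    (hquad : ∀ k, x k ∈ closedBall p δ → x (k + 1) ∈ closedBall p δ → D (k + 1) ≤ K * D k ^ 2)
    (k : ℕ) : x k ∈ closedBall p δ ∧ D k ≤ dist (x 0) p * (1 / 2) ^ k := by
  set r := dist (x 0) p
  have hmem : ∀ {j : ℕ}, dist (x j) p ≤ r + 2 * C * r * (1 - (1 / 2) ^ j) → x j ∈ closedBall p δ :=
    fun {j} hj => by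
      have : 0 ≤ 2 * C * r * (1 / 2 : ℝ) ^ j := by positivity
      rw [mem_closedBall]
      linarith
  -- `r` plus the first `k` terms of the geometric series `C * r * (1 / 2) ^ j` bounding the steps
  suffices h : dist (x k) p ≤ r + 2 * C * r * (1 - (1 / 2) ^ k) ∧ D k ≤ r * (1 / 2) ^ k from
    ⟨hmem h.1, h.2⟩
  induction k with
  | zero => simpa using ⟨le_rfl, hD0⟩
  | succ k ih =>
    obtain ⟨hdist, hDk⟩ := ih
    have hpow : (1 / 2 : ℝ) ^ k ≤ 1 := pow_le_one₀ (by norm_num) (by norm_num)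
    have hdist' : dist (x (k + 1)) p ≤ r + 2 * C * r * (1 - (1 / 2) ^ (k + 1)) := by
      calc dist (x (k + 1)) p ≤ dist (x k) (x (k + 1)) + dist (x k) p := dist_triangle_left _ _ _
        _ ≤ C * (r * (1 / 2) ^ k) + (r + 2 * C * r * (1 - (1 / 2) ^ k)) := by
          gcongr
          exact (hstep k (hmem hdist)).trans (by gcongr)
        _ = r + 2 * C * r * (1 - (1 / 2) ^ (k + 1)) := by ring
    refine ⟨hdist', ?_⟩
    calc D (k + 1) ≤ K * D k ^ 2 := hquad k (hmem hdist) (hmem hdist')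
      _ ≤ K * (r * (1 / 2) ^ k) ^ 2 := by have := hD k; gcongr
      _ = K * r * (1 / 2) ^ k * (r * (1 / 2) ^ k) := by ring
      _ ≤ 1 / 2 * 1 * (r * (1 / 2) ^ k) := by gcongr
      _ = r * (1 / 2) ^ (k + 1) := by ring

lemma mem_closedBall_and_tendsto_of_quadratic_contraction [CompleteSpace X]
    (hD : ∀ k, 0 ≤ D k) (hC : 0 ≤ C) (hK : 0 ≤ K) (hD0 : D 0 ≤ dist (x 0) p)
    (hδ : (1 + 2 * C) * dist (x 0) p ≤ δ) (hhalf : K * dist (x 0) p ≤ 1 / 2)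
    (hstep : ∀ k, x k ∈ closedBall p δ → dist (x k) (x (k + 1)) ≤ C * D k)
    (hquad : ∀ k, x k ∈ closedBall p δ → x (k + 1) ∈ closedBall p δ → D (k + 1) ≤ K * D k ^ 2) :
    (∀ k, x k ∈ closedBall p δ) ∧ Tendsto D atTop (𝓝 0) ∧
      ∃ xhat ∈ closedBall p δ, Tendsto x atTop (𝓝 xhat) := by
  have hnear := mem_closedBall_and_le_geometric_of_quadratic_contraction
    hD hC hK hD0 hδ hhalf hstep hquad
  have hball : ∀ k, x k ∈ closedBall p δ := fun k => (hnear k).1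
  have hDlim : Tendsto D atTop (𝓝 0) := by
    refine squeeze_zero hD (fun k => (hnear k).2) ?_
    simpa using (tendsto_pow_atTop_nhds_zero_of_lt_one
      (by norm_num : (0 : ℝ) ≤ 1 / 2) (by norm_num)).const_mul (dist (x 0) p)
  have hcauchy : CauchySeq x := by
    refine cauchySeq_of_le_geometric (1 / 2) (C * dist (x 0) p) (by norm_num) fun k => ?_
    rw [mul_assoc]
    exact (hstep k (hball k)).trans (by gcongr; exact (hnear k).2)
  obtain ⟨xhat, hxhat⟩ := cauchySeq_tendsto_of_complete hcauchy
  exact ⟨hball, hDlim, xhat,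
    isClosed_closedBall.mem_of_tendsto hxhat (Eventually.of_forall hball), hxhat⟩

end QuadraticContraction

section Matrix

variable {m n p : ℕ}

lemma inner_matCLM_transpose (A : Matrix (Fin m) (Fin n) ℝ) (u : EuclideanSpace ℝ (Fin m))
    (w : EuclideanSpace ℝ (Fin n)) : ⟪matCLM Aᵀ u, w⟫ = ⟪u, matCLM A w⟫ := by
  have hadj := Matrix.toEuclideanLin_conjTranspose_eq_adjoint A
  rw [Matrix.conjTranspose_eq_transpose_of_trivial] at hadj
  simp only [matCLM, LinearMap.coe_toContinuousLinearMap', hadj, LinearMap.adjoint_inner_left]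

lemma matCLM_normal_eq_iff (A : Matrix (Fin m) (Fin n) ℝ) (L : Matrix (Fin p) (Fin n) ℝ) (μ : ℝ)
    (f : EuclideanSpace ℝ (Fin m)) (d : EuclideanSpace ℝ (Fin n)) :
    matCLM (Aᵀ * A + μ • (Lᵀ * L)) d = -(matCLM Aᵀ f) ↔
      ∀ w, ⟪matCLM A d + f, matCLM A w⟫ + μ * ⟪matCLM L d, matCLM L w⟫ = 0 := by
  have hexpand : matCLM (Aᵀ * A + μ • (Lᵀ * L)) d + matCLM Aᵀ f =
      matCLM Aᵀ (matCLM A d + f) + μ • matCLM Lᵀ (matCLM L d) := by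
    rw [map_add, add_right_comm]
    simp [matCLM, Matrix.toLpLin_apply, Matrix.mulVec_mulVec]
  rw [eq_neg_iff_add_eq_zero, hexpand, ext_iff_inner_right ℝ]
  simp only [inner_add_left (matCLM Aᵀ _), real_inner_smul_left, inner_matCLM_transpose,
    inner_zero_left]

lemma isLMStep_matCLM {A : Matrix (Fin m) (Fin n) ℝ} {L : Matrix (Fin p) (Fin n) ℝ}
    {f : EuclideanSpace ℝ (Fin m)} {d : EuclideanSpace ℝ (Fin n)} (hd0 : f = 0 → d = 0)
    (hd : f ≠ 0 → matCLM (Aᵀ * A + ‖f‖ ^ 2 • (Lᵀ * L)) d = -(matCLM Aᵀ f)) :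
    IsLMStep (matCLM A) (matCLM L) f d := by
  refine ⟨hd0, (matCLM_normal_eq_iff A L _ f d).1 ?_⟩
  rcases eq_or_ne f 0 with hf | hf
  · simp [hf, hd0 hf]
  · exact hd hf

end Matrix

lemma mul_le_and_mul_le_half_of_le_min_div {t δ a b : ℝ} (ht : 0 ≤ t) (hδ : 0 ≤ δ) (ha : 0 ≤ a)
    (hb : 0 ≤ b) (h : t ≤ min (δ / (2 + 4 * a)) (1 / (2 * b))) :
    (1 + 2 * a) * t ≤ δ ∧ b * t ≤ 1 / 2 := by
  have hleft := mul_le_of_le_div₀ hδ (by positivity) (h.trans (min_le_left _ _))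
  have hright := mul_le_of_le_div₀ zero_le_one (by positivity) (h.trans (min_le_right _ _))
  constructor <;> linarith [mul_nonneg ha ht]

theorem lmmss_local_quadratic_convergence_general
    {E G H : Type*} [NormedAddCommGroup E] [NormedSpace ℝ E] [CompleteSpace E]
    [NormedAddCommGroup G] [InnerProductSpace ℝ G] [NormedAddCommGroup H] [InnerProductSpace ℝ H]
    {F : E → G} {A : E → E →L[ℝ] G} {B : E →L[ℝ] H} {xstar : E} {δ c1 cF c2 γ : ℝ}
    (hderiv : ∀ y ∈ closedBall xstar (2 * δ), HasFDerivAt F (A y) y)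
    (hxstar : F xstar = 0) (hc1nonneg : 0 ≤ c1)
    (hc1 : ∀ x ∈ closedBall xstar (2 * δ), ∀ y ∈ closedBall xstar (2 * δ),
      ‖A y (x - y) - (F x - F y)‖ ≤ c1 * ‖x - y‖ ^ 2)
    (hcF : ∀ x ∈ closedBall xstar (2 * δ), ∀ y ∈ closedBall xstar (2 * δ),
      ‖F x - F y‖ ≤ cF * ‖x - y‖)
    (hc2pos : 0 < c2)
    (hc2 : ∀ x ∈ closedBall xstar (2 * δ), c2 * infDist x {y | F y = 0} ≤ ‖F x‖)
    (hγ : 0 < γ)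
    (hcomp : ∀ x ∈ closedBall xstar (2 * δ), ∀ v, γ * ‖v‖ ^ 2 ≤ ‖A x v‖ ^ 2 + ‖B v‖ ^ 2)
    {x d : ℕ → E} (hd : ∀ k, IsLMStep (A (x k)) B (F (x k)) (d k))
    (hstep : ∀ k, x (k + 1) = x k + d k)
    (hx0 : (1 + 2 * lmC3 c1 c2 cF γ ‖B‖) * dist (x 0) xstar ≤ δ)
    (hx0' : lmC5 c1 c2 cF γ ‖B‖ * dist (x 0) xstar ≤ 1 / 2) :
    (∀ k, infDist (x (k + 1)) {y | F y = 0} ≤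
        lmC5 c1 c2 cF γ ‖B‖ * infDist (x k) {y | F y = 0} ^ 2) ∧
      Tendsto (fun k => infDist (x k) {y | F y = 0}) atTop (𝓝 0) ∧
      ∃ xhat, F xhat = 0 ∧ xhat ∈ closedBall xstar δ ∧ Tendsto x atTop (𝓝 xhat) := by
  have hc3 : 0 ≤ lmC3 c1 c2 cF γ ‖B‖ := lmC3_nonneg hc2pos.le
  have hδ : 0 ≤ δ := le_trans (by positivity) hx0
  have hsub : closedBall xstar δ ⊆ closedBall xstar (2 * δ) :=
    closedBall_subset_closedBall (by linarith)
  have hFle : ∀ y ∈ closedBall xstar δ, ‖F y‖ ≤ cF * infDist y {y | F y = 0} := fun y hy =>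
    norm_le_mul_infDist_zeros hxstar hy fun z hz => hcF z hz y (hsub hy)
  have hobj := fun k (hk : x k ∈ closedBall xstar δ) =>
    (hd k).objective_le_infDist_zeros hxstar hk fun z hz => hc1 z hz _ (hsub hk)
  have hnorm : ∀ k, x k ∈ closedBall xstar δ →
      ‖d k‖ ≤ lmC3 c1 c2 cF γ ‖B‖ * infDist (x k) {y | F y = 0} := fun k hk =>
    (hd k).norm_le_lmC3_mul hc2pos hγ infDist_nonneg (hobj k hk) (hFle _ hk) (hc2 _ (hsub hk))
      (hcomp _ (hsub hk) _)
  have hquad : ∀ k, x k ∈ closedBall xstar δ → x (k + 1) ∈ closedBall xstar δ →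
      infDist (x (k + 1)) {y | F y = 0} ≤
        lmC5 c1 c2 cF γ ‖B‖ * infDist (x k) {y | F y = 0} ^ 2 := by
    intro k hk hk'
    rw [hstep] at hk' ⊢
    refine infDist_zeros_add_le_lmC5_mul_sq hc1nonneg hc2pos (hnorm k hk)
      (norm_residual_le_lmC4_mul_sq (hobj k hk) (hFle _ hk)) ?_ (hc2 _ (hsub hk'))
    simpa using hc1 _ (hsub hk') _ (hsub hk)
  obtain ⟨hball, hlim, xhat, hmem, hxhat⟩ := mem_closedBall_and_tendsto_of_quadratic_contraction
    (fun _ => infDist_nonneg) hc3 (lmC5_nonneg hc1nonneg hc2pos.le)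
    (infDist_le_dist_of_mem (s := {y | F y = 0}) hxstar) hx0 hx0'
    (fun k hk => by simpa [hstep] using hnorm k hk) hquad
  have hFlim : Tendsto (fun k => F (x k)) atTop (𝓝 0) :=
    squeeze_zero_norm (fun k => hFle _ (hball k)) (by simpa using hlim.const_mul cF)
  exact ⟨fun k => hquad k (hball k) (hball _), hlim, xhat, tendsto_nhds_unique
    ((hderiv xhat (hsub hmem)).continuousAt.tendsto.comp hxhat) hFlim, hmem, hxhat⟩

/-- under the local assumptions, if the LMMSS sequence with unit steps starts at
`x₀ ∈ B(x*, r)` with `r = min{δ/(2 + 4c₃), 1/(2c₅)}`, then (i) `dist(x_{k+1}, X*) ≤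
c₅·dist(x_k, X*)²` for all `k`; (ii) `dist(x_k, X*) → 0`; (iii) `x_k` converges to some
`x̂ ∈ X* ∩ B(x*, δ)`. -/
theorem lmmss_local_quadratic_convergence
    (n m p : ℕ)
    (F : EuclideanSpace ℝ (Fin n) → EuclideanSpace ℝ (Fin m))
    (J : EuclideanSpace ℝ (Fin n) → Matrix (Fin m) (Fin n) ℝ)
    (hdiff : ∀ x, HasFDerivAt F (matCLM (J x)) x)
    (hJcont : Continuous J)
    (hne : ∃ x, F x = 0)
    (xstar : EuclideanSpace ℝ (Fin n)) (hxstar : F xstar = 0)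
    (δ : ℝ) (hδ0 : 0 < δ) (hδh : δ < 1 / 2)
    (c1 : ℝ) (hc1pos : 0 < c1)
    (hc1 : ∀ x ∈ closedBall xstar (2 * δ), ∀ y ∈ closedBall xstar (2 * δ),
      ‖matCLM (J y) (x - y) - (F x - F y)‖ ≤ c1 * ‖x - y‖ ^ 2)
    (cF : ℝ) (hcFpos : 0 < cF)
    (hcF : ∀ x ∈ closedBall xstar (2 * δ), ∀ y ∈ closedBall xstar (2 * δ),
      ‖F x - F y‖ ≤ cF * ‖x - y‖)
    (c2 : ℝ) (hc2pos : 0 < c2)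
    (hc2 : ∀ x ∈ closedBall xstar (2 * δ),
      c2 * infDist x {y | F y = 0} ≤ ‖F x‖)
    (L : Matrix (Fin p) (Fin n) ℝ) (γ : ℝ) (hγ : 0 < γ)
    (hcomp : ∀ (x : EuclideanSpace ℝ (Fin n)) (v : EuclideanSpace ℝ (Fin n)),
      ‖matCLM (J x) v‖ ^ 2 + ‖matCLM L v‖ ^ 2 ≥ γ * ‖v‖ ^ 2)
    (x d : ℕ → EuclideanSpace ℝ (Fin n))
    (hd0 : ∀ k, F (x k) = 0 → d k = 0)
    (hd : ∀ k, F (x k) ≠ 0 →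
      matCLM ((J (x k))ᵀ * J (x k) + ‖F (x k)‖ ^ 2 • (Lᵀ * L)) (d k) =
        -(matCLM (J (x k))ᵀ (F (x k))))
    (hstep : ∀ k, x (k + 1) = x k + d k)
    (hx0 : x 0 ∈ closedBall xstar
      (min (δ / (2 + 4 * lmC3 c1 c2 cF γ ‖matCLM L‖))
        (1 / (2 * lmC5 c1 c2 cF γ ‖matCLM L‖)))) :
    (∀ k, infDist (x (k + 1)) {y | F y = 0} ≤
        lmC5 c1 c2 cF γ ‖matCLM L‖ * infDist (x k) {y | F y = 0} ^ 2) ∧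
      Filter.Tendsto (fun k => infDist (x k) {y | F y = 0}) Filter.atTop (nhds 0) ∧
      ∃ xhat : EuclideanSpace ℝ (Fin n),
        F xhat = 0 ∧ xhat ∈ closedBall xstar δ ∧
          Filter.Tendsto x Filter.atTop (nhds xhat) := by
  obtain ⟨hball, hhalf⟩ := mul_le_and_mul_le_half_of_le_min_div dist_nonneg hδ0.le
    (lmC3_nonneg hc2pos.le) (lmC5_nonneg hc1pos.le hc2pos.le) (mem_closedBall.1 hx0)
  exact lmmss_local_quadratic_convergence_general (fun y _ => hdiff y) hxstar hc1pos.le hc1 hcF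
    hc2pos hc2 hγ (fun y _ => hcomp y) (fun k => isLMStep_matCLM (hd0 k) (hd k)) hstep hball hhalf
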